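/- The ℝ-linear (ℂ-antilinear) map S : ℂ² → ℂ² defined by S(z₁, z₂) = ((ζ−1)·conj(z₂), (ζ−1)·conj(z₁)) is an involution (S ∘ S = id) and maps the lattice Λ_A bijectively onto itself. Hence S induces an anti-holomorphic involution σ of the abelian surface A = ℂ²/Λ_A. -/

import Mathlib

noncomputable section

/-- ζ = (1 + √3·i)/2, a primitive sixth root of unity. -/
def ζ : ℂ := (1 + (Real.sqrt 3 : ℂ) * Complex.I) / 2

/-- The ℂ-antilinear map S(z₁,z₂) = ((ζ−1)·conj z₂, (ζ−1)·conj z₁). -/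
def Smap (v : ℂ × ℂ) : ℂ × ℂ :=
  ((ζ - 1) * (starRingEnd ℂ) v.2, (ζ - 1) * (starRingEnd ℂ) v.1)

/-- The lattice Λ_A = ℤ𝐞₁ ⊕ ℤ𝐞₂ ⊕ ℤ𝐞₃ ⊕ ℤ𝐞₄ ⊂ ℂ², with
𝐞₁ = (1,0), 𝐞₂ = (ζ,1), 𝐞₃ = (0,1+ζ), 𝐞₄ = (0,2). -/
def ΛA : Set (ℂ × ℂ) :=
  {v | ∃ a b c d : ℤ, v = (a : ℂ) • ((1 : ℂ), (0 : ℂ)) + (b : ℂ) • (ζ, (1 : ℂ))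
    + (c : ℂ) • ((0 : ℂ), 1 + ζ) + (d : ℂ) • ((0 : ℂ), (2 : ℂ))}

theorem zeta_sq : ζ ^ 2 = ζ - 1 := by
  have h3 : (Real.sqrt 3 : ℂ) ^ 2 = 3 := by
    rw [← Complex.ofReal_pow, Real.sq_sqrt (by norm_num)]; norm_num
  unfold ζ
  linear_combination (1 / 4 : ℂ) * Complex.I ^ 2 * h3 + (3 / 4 : ℂ) * Complex.I_sq

theorem zeta_conj : (starRingEnd ℂ) ζ = 1 - ζ := by
  unfold ζ
  simp only [map_div₀, map_add, map_mul, map_one, Complex.conj_ofReal, Complex.conj_I, map_ofNat]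
  ring

theorem Smap_invol (v : ℂ × ℂ) : Smap (Smap v) = v := by
  have h := zeta_sq
  ext1
  · simp only [Smap, map_mul, map_sub, map_one, zeta_conj, Complex.conj_conj]
    linear_combination (-v.1) * h
  · simp only [Smap, map_mul, map_sub, map_one, zeta_conj, Complex.conj_conj]
    linear_combination (-v.2) * h

theorem Smap_mapsTo : Set.MapsTo Smap ΛA ΛA := by
  rintro v ⟨a, b, c, d, rfl⟩
  have h := zeta_sq
  refine ⟨-(b + 2 * d + c), b + 2 * d + 2 * c, a + b, -(a + b + c + d), ?_⟩
  ext1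
  · have h2 : (starRingEnd ℂ) 2 = 2 := map_ofNat _ 2
    simp [Smap, zeta_conj, h2]
    linear_combination (-(c : ℂ)) * h
  · simp [Smap, zeta_conj]
    linear_combination (-(b : ℂ)) * h

/-- S is an involution and maps Λ_A bijectively onto itself; hence it induces an
anti-holomorphic involution σ of A = ℂ²/Λ_A. -/
theorem stmt12 : (∀ v : ℂ × ℂ, Smap (Smap v) = v) ∧ Set.BijOn Smap ΛA ΛA := by
  refine ⟨Smap_invol, Smap_mapsTo, ?_, ?_⟩
  · intro x _ y _ hxy
    rw [← Smap_invol x, hxy, Smap_invol]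
  · intro v hv
    exact ⟨Smap v, Smap_mapsTo hv, Smap_invol v⟩
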